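/- arXiv:2604.22701 — 2 statements merged into one kernel-verified Lean document; each statement's English description precedes it below -/
import Mathlib

section
/- Let H be an infinite-dimensional separable complex Hilbert space, (Ω, 𝔐, μ) a measure space, φ and Φ as in the context, and 𝒜 : Ω → B(H) such that t ↦ ⟨𝒜_t x, y⟩ is measurable for all x, y ∈ H. If for every pair of orthonormal bases (e_n)_{n=1}^∞ and (f_n)_{n=1}^∞ of H one has ∫_Ω Φ((⟨𝒜_t e_n, f_n⟩)_{n=1}^∞) dμ(t) < +∞, then for all sequences (x_n)_{n=1}^∞ and (y_n)_{n=1}^∞ in H that are weakly 2-summable with ‖(x_n)‖_{2,w} ≤ 1 and ‖(y_n)‖_{2,w} ≤ 1, one also has ∫_Ω Φ((⟨𝒜_t x_n, y_n⟩)_{n=1}^∞) dμ(t) < +∞. -/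
open MeasureTheory ENNReal

/-- The extension `Φ` of a norm `φ` on finitely supported sequences to arbitrary
complex sequences: `Φ((a_n)) = sup_N φ(a_0, …, a_{N-1}, 0, 0, …) ∈ [0, ∞]`. -/
noncomputable def Phi (φ : (ℕ →₀ ℂ) → ℝ) (a : ℕ → ℂ) : ℝ≥0∞ :=
  ⨆ N : ℕ, ENNReal.ofReal (φ (∑ n ∈ Finset.range N, Finsupp.single n (a n)))

/-!
Fix a Hilbert basis `(g_n)`. By the closed graph theorem a weakly `2`-summable sequence is the
image `(X g_n)` of the basis under a bounded operator `X`, and every bounded operator is a finite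
linear combination of unitaries. Expanding `⟨𝒜_t (X g_n), Y g_n⟩` sesquilinearly in `X` and `Y`
therefore writes it as a finite linear combination of the sequences `⟨𝒜_t (U g_n), V g_n⟩` with
`U` and `V` unitary. For these `(U g_n)` and `(V g_n)` are again Hilbert bases, and the functions
of `t` with integrable `Φ` form a vector space.
-/

section SymmetricNorm

lemma continuous_seminorm_sum_smul {𝕜 E ι : Type*} [NormedField 𝕜] [AddCommGroup E] [Module 𝕜 E]
    (p : Seminorm 𝕜 E) (s : Finset ι) (v : ι → E) :
    Continuous fun a : ι → 𝕜 => p (∑ i ∈ s, a i • v i) := by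
  let _ : SeminormedAddCommGroup E := p.toAddGroupSeminorm.toSeminormedAddCommGroup
  let _ : NormedSpace 𝕜 E := ⟨fun c x => (map_smul_eq_mul p c x).le⟩
  have hsum : Continuous fun a : ι → 𝕜 => ∑ i ∈ s, a i • v i := by fun_prop
  exact hsum.norm

lemma ofReal_sum_range_single_le_phi (φ : (ℕ →₀ ℂ) → ℝ) (a : ℕ → ℂ) (N : ℕ) :
    ENNReal.ofReal (φ (∑ n ∈ Finset.range N, Finsupp.single n (a n))) ≤ Phi φ a :=
  le_iSup (fun N => ENNReal.ofReal (φ (∑ n ∈ Finset.range N, Finsupp.single n (a n)))) N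

variable (p : Seminorm ℂ (ℕ →₀ ℂ))

lemma measurable_phi : Measurable (Phi p) := by
  refine Measurable.iSup fun N => Measurable.ennreal_ofReal (Continuous.measurable ?_)
  simpa using continuous_seminorm_sum_smul p (Finset.range N) fun n => Finsupp.single n 1

lemma phi_zero : Phi p 0 = 0 := by
  simp [Phi]

lemma phi_add_le (a b : ℕ → ℂ) : Phi p (a + b) ≤ Phi p a + Phi p b := by
  refine iSup_le fun N => ?_
  simp only [Pi.add_apply, Finsupp.single_add, Finset.sum_add_distrib]
  calc ENNReal.ofReal (p (_ + _))
      ≤ ENNReal.ofReal (p (∑ n ∈ Finset.range N, Finsupp.single n (a n))) +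
          ENNReal.ofReal (p (∑ n ∈ Finset.range N, Finsupp.single n (b n))) :=
        (ENNReal.ofReal_le_ofReal (map_add_le_add p _ _)).trans ENNReal.ofReal_add_le
    _ ≤ Phi p a + Phi p b :=
        add_le_add (ofReal_sum_range_single_le_phi p a N) (ofReal_sum_range_single_le_phi p b N)

lemma phi_smul (c : ℂ) (a : ℕ → ℂ) : Phi p (c • a) = ‖c‖ₑ * Phi p a := by
  simp_rw [Phi, ENNReal.mul_iSup, Pi.smul_apply, ← Finsupp.smul_single, ← Finset.smul_sum,
    map_smul_eq_mul, ENNReal.ofReal_mul (norm_nonneg c), ofReal_norm]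

/-- The space `L¹(μ; Φ)` of almost everywhere measurable sequence-valued functions `F` with
`∫ Φ(F t) dμ(t) < ∞`, without identifying functions that agree almost everywhere. -/
noncomputable def phiIntegrable {Ω : Type*} [MeasurableSpace Ω] (μ : Measure Ω) :
    Submodule ℂ (Ω → ℕ → ℂ) where
  carrier := {F | AEMeasurable F μ ∧ ∫⁻ t, Phi p (F t) ∂μ < ⊤}
  zero_mem' := ⟨aemeasurable_const, by simp [phi_zero]⟩
  add_mem' := by
    rintro F G ⟨hF, hFint⟩ ⟨hG, hGint⟩
    refine ⟨hF.add hG, ?_⟩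
    calc ∫⁻ t, Phi p (F t + G t) ∂μ
        ≤ ∫⁻ t, (Phi p (F t) + Phi p (G t)) ∂μ := lintegral_mono fun t => phi_add_le p _ _
      _ = ∫⁻ t, Phi p (F t) ∂μ + ∫⁻ t, Phi p (G t) ∂μ :=
        lintegral_add_left' ((measurable_phi p).comp_aemeasurable hF) _
      _ < ⊤ := ENNReal.add_lt_top.2 ⟨hFint, hGint⟩
  smul_mem' := by
    rintro c F ⟨hF, hFint⟩
    refine ⟨hF.const_smul c, ?_⟩
    calc ∫⁻ t, Phi p (c • F t) ∂μ = ∫⁻ t, ‖c‖ₑ * Phi p (F t) ∂μ := by simp only [phi_smul]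
      _ = ‖c‖ₑ * ∫⁻ t, Phi p (F t) ∂μ := lintegral_const_mul' _ _ enorm_ne_top
      _ < ⊤ := ENNReal.mul_lt_top enorm_lt_top hFint

end SymmetricNorm

section HilbertSpace

variable {𝕜 H ι : Type*} [RCLike 𝕜] [NormedAddCommGroup H] [InnerProductSpace 𝕜 H]

lemma countable_of_orthonormal [TopologicalSpace.SeparableSpace H] {v : ι → H}
    (hv : Orthonormal 𝕜 v) : Countable ι := by
  have hdist : ∀ i j, i ≠ j → 1 ≤ dist (v i) (v j) := fun i j hij => by
    have hsq : ‖v i - v j‖ ^ 2 = 2 := by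
      rw [norm_sub_sq (𝕜 := 𝕜), hv.inner_eq_zero hij, hv.norm_eq_one, hv.norm_eq_one]
      norm_num
    rw [dist_eq_norm]
    nlinarith [norm_nonneg (v i - v j)]
  refine Pairwise.countable_of_isOpen_disjoint (s := fun i => Metric.ball (v i) (1 / 2))
    (fun i j hij => Metric.ball_disjoint_ball ?_) (fun _ => Metric.isOpen_ball)
    fun i => ⟨v i, Metric.mem_ball_self one_half_pos⟩
  linarith [hdist i j hij]

lemma nonempty_hilbertBasis_nat [CompleteSpace H] [TopologicalSpace.SeparableSpace H]
    (hinf : ¬ FiniteDimensional 𝕜 H) : Nonempty (HilbertBasis ℕ 𝕜 H) := by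
  obtain ⟨w, b, -⟩ := exists_hilbertBasis 𝕜 H
  have : Countable w := countable_of_orthonormal b.orthonormal
  have : Infinite w := by
    by_contra hfin
    rw [not_infinite_iff_finite] at hfin
    have := Fintype.ofFinite w
    exact hinf b.toOrthonormalBasis.toBasis.finiteDimensional_of_finite
  obtain ⟨e⟩ := nonempty_equiv_of_countable (α := ℕ) (β := w)
  exact ⟨HilbertBasis.mk (b.orthonormal.comp e e.injective)
    (by rw [e.surjective.range_comp, b.dense_span])⟩

lemma exists_hilbertBasis_eq_unitary_comp [CompleteSpace H] (g : HilbertBasis ι 𝕜 H)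
    {U : H →L[𝕜] H} (hU : U ∈ unitary (H →L[𝕜] H)) :
    ∃ e : HilbertBasis ι 𝕜 H, ⇑e = U ∘ g := by
  classical
  let V : H ≃ₗᵢ[𝕜] H := Unitary.linearIsometryEquiv ⟨U, hU⟩
  refine ⟨HilbertBasis.ofRepr (V.symm.trans g.repr), funext fun i => ?_⟩
  rw [Function.comp_apply, ← HilbertBasis.repr_symm_single, ← g.repr_symm_single]
  rfl

variable [CompleteSpace H]

/-- The analysis operator `h ↦ (⟨x_i, h⟩)_i` of a weakly `2`-summable family `x`; it is bounded by
the closed graph theorem. -/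
noncomputable def analysisOperator (x : ι → H)
    (hx : ∀ h : H, Memℓp (fun i => inner 𝕜 (x i) h) 2) : H →L[𝕜] lp (fun _ : ι => 𝕜) 2 :=
  ContinuousLinearMap.ofSeqClosedGraph
    (g := { toFun := fun h => ⟨fun i => inner 𝕜 (x i) h, hx h⟩
            map_add' := fun _ _ => Subtype.ext (funext fun _ => inner_add_right _ _ _)
            map_smul' := fun _ _ => Subtype.ext (funext fun _ => inner_smul_right _ _ _) })
    (by
      intro u h f hu hf
      ext i
      have hcoord := ((lp.evalCLM 𝕜 (fun _ : ι => 𝕜) 2 i).continuous.tendsto f).comp hf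
      exact tendsto_nhds_unique hcoord (tendsto_const_nhds.inner hu))

lemma exists_continuousLinearMap_comp_hilbertBasis_eq (g : HilbertBasis ι 𝕜 H) {x : ι → H}
    (hx : ∀ h : H, Memℓp (fun i => inner 𝕜 (x i) h) 2) : ∃ X : H →L[𝕜] H, ⇑X ∘ g = x := by
  let T : H →L[𝕜] H := g.repr.symm.toContinuousLinearEquiv ∘L analysisOperator x hx
  refine ⟨T.adjoint, funext fun i => ext_inner_right 𝕜 fun h => ?_⟩
  calc inner 𝕜 (T.adjoint (g i)) h = g.repr (T h) i := by
        rw [ContinuousLinearMap.adjoint_inner_left, g.repr_apply_apply]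
    _ = analysisOperator x hx h i := by simp [T]
    _ = inner 𝕜 (x i) h := rfl

end HilbertSpace

section Sesquilinear

lemma semilinear_apply_apply_mem_of_mem_span {R S T M N P : Type*} [Semiring R] [Semiring S]
    [CommSemiring T] [AddCommMonoid M] [AddCommMonoid N] [AddCommMonoid P] [Module R M]
    [Module S N] [Module T P]
    {σ : R →+* T} {τ : S →+* T} (f : M →ₛₗ[σ] N →ₛₗ[τ] P) (K : Submodule T P)
    {s : Set M} {t : Set N} (hf : ∀ x ∈ s, ∀ y ∈ t, f x y ∈ K)
    {x : M} {y : N} (hx : x ∈ Submodule.span R s) (hy : y ∈ Submodule.span S t) : f x y ∈ K := by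
  have hright : ∀ x ∈ s, f x y ∈ K := fun x hxs =>
    Submodule.span_le (p := K.comap (f x)).2 (hf x hxs) hy
  exact Submodule.span_le (p := K.comap (f.flip y)).2 hright hx

variable {H Ω ι : Type*} [NormedAddCommGroup H] [NormedSpace ℂ H]

/-- For a family of sesquilinear forms `B_t` and a sequence `g`, the map sending operators `V`
and `U` to the sequence-valued function `t ↦ (B_t(V g_n, U g_n))_n`. -/
def diagonalCoeff (B : Ω → H →ₗ⋆[ℂ] H →ₗ[ℂ] ℂ) (g : ι → H) :
    (H →L[ℂ] H) →ₗ⋆[ℂ] (H →L[ℂ] H) →ₗ[ℂ] (Ω → ι → ℂ) :=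
  LinearMap.mk₂'ₛₗ (starRingEnd ℂ) (RingHom.id ℂ) (fun V U t n => B t (V (g n)) (U (g n)))
    (fun _ _ _ => by ext; simp) (fun _ _ _ => by ext; simp)
    (fun _ _ _ => by ext; simp) (fun _ _ _ => by ext; simp)

end Sesquilinear

lemma diagonalCoeff_mem_phiIntegrable {H Ω : Type*} [NormedAddCommGroup H] [InnerProductSpace ℂ H]
    [CompleteSpace H] [MeasurableSpace Ω] {μ : Measure Ω} (p : Seminorm ℂ (ℕ →₀ ℂ))
    {B : Ω → H →ₗ⋆[ℂ] H →ₗ[ℂ] ℂ} (hmeas : ∀ x y, AEMeasurable (fun t => B t y x) μ)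
    (hONB : ∀ e f : HilbertBasis ℕ ℂ H, ∫⁻ t, Phi p (fun n => B t (f n) (e n)) ∂μ < ⊤)
    (g : HilbertBasis ℕ ℂ H) (V U : H →L[ℂ] H) : diagonalCoeff B g V U ∈ phiIntegrable p μ := by
  have hspan (T : H →L[ℂ] H) : T ∈ Submodule.span ℂ (unitary (H →L[ℂ] H) : Set (H →L[ℂ] H)) :=
    CStarAlgebra.span_unitary (H →L[ℂ] H) ▸ Submodule.mem_top
  refine semilinear_apply_apply_mem_of_mem_span _ _ (fun V hV U hU => ?_) (hspan V) (hspan U)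
  obtain ⟨e, he⟩ := exists_hilbertBasis_eq_unitary_comp g hU
  obtain ⟨f, hf⟩ := exists_hilbertBasis_eq_unitary_comp g hV
  have hfin := hONB e f
  rw [he, hf] at hfin
  exact ⟨aemeasurable_pi_lambda _ fun n => hmeas _ _, hfin⟩

theorem stmt13_general {H Ω : Type*} [NormedAddCommGroup H] [InnerProductSpace ℂ H]
    [CompleteSpace H] [TopologicalSpace.SeparableSpace H] (hinf : ¬ FiniteDimensional ℂ H)
    [MeasurableSpace Ω] {μ : Measure Ω} (p : Seminorm ℂ (ℕ →₀ ℂ))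
    {B : Ω → H →ₗ⋆[ℂ] H →ₗ[ℂ] ℂ} (hmeas : ∀ x y, AEMeasurable (fun t => B t y x) μ)
    (hONB : ∀ e f : HilbertBasis ℕ ℂ H, ∫⁻ t, Phi p (fun n => B t (f n) (e n)) ∂μ < ⊤)
    {x y : ℕ → H} (hx : ∀ h : H, Summable fun n => ‖(inner ℂ (x n) h : ℂ)‖ ^ (2 : ℝ))
    (hy : ∀ h : H, Summable fun n => ‖(inner ℂ (y n) h : ℂ)‖ ^ (2 : ℝ)) :
    ∫⁻ t, Phi p (fun n => B t (y n) (x n)) ∂μ < ⊤ := by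
  obtain ⟨g⟩ := nonempty_hilbertBasis_nat hinf
  obtain ⟨X, rfl⟩ := exists_continuousLinearMap_comp_hilbertBasis_eq g fun h => memℓp_gen (hx h)
  obtain ⟨Y, rfl⟩ := exists_continuousLinearMap_comp_hilbertBasis_eq g fun h => memℓp_gen (hy h)
  exact (diagonalCoeff_mem_phiIntegrable p hmeas hONB g Y X).2

/-- let `φ` be a symmetric norming function on finitely supported
sequences (normalized, permutation- and absolute-value-invariant, monotone) and `Φ`
its extension. If `𝒜 : Ω → B(H)` has measurable matrix coefficients and
`∫_Ω Φ((⟨𝒜_t e_n, f_n⟩)_n) dμ < ∞` for every pair of orthonormal bases `(e_n)`,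
`(f_n)`, then the same holds for all weakly `2`-summable sequences `(x_n)`, `(y_n)`
with `‖(x_n)‖_{2,w} ≤ 1` and `‖(y_n)‖_{2,w} ≤ 1`. -/
theorem stmt13 (H : Type*) [NormedAddCommGroup H] [InnerProductSpace ℂ H]
    [CompleteSpace H] [TopologicalSpace.SeparableSpace H]
    (hinf : ¬ FiniteDimensional ℂ H)
    {Ω : Type*} [MeasurableSpace Ω] (μ : Measure Ω)
    (φ : (ℕ →₀ ℂ) → ℝ)
    (hφ_nonneg : ∀ a, 0 ≤ φ a)
    (hφ_def : ∀ a, φ a = 0 ↔ a = 0)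
    (hφ_add : ∀ a b, φ (a + b) ≤ φ a + φ b)
    (hφ_smul : ∀ (c : ℂ) (a), φ (c • a) = ‖c‖ * φ a)
    (hφ_one : φ (Finsupp.single 0 1) = 1)
    (hφ_perm : ∀ (σ : Equiv.Perm ℕ) (a), φ (Finsupp.equivMapDomain σ a) = φ a)
    (hφ_abs : ∀ a, φ (Finsupp.mapRange (fun z : ℂ => (‖z‖ : ℂ)) (by simp) a) = φ a)
    (hφ_mono : ∀ a b : ℕ →₀ ℂ, (∀ n, ‖a n‖ ≤ ‖b n‖) → φ a ≤ φ b)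
    (𝒜 : Ω → (H →L[ℂ] H))
    (hmeas : ∀ x y : H, Measurable (fun t => (inner ℂ y (𝒜 t x) : ℂ)))
    (hONB : ∀ e f : ℕ → H,
      Orthonormal ℂ e → (Submodule.span ℂ (Set.range e)).topologicalClosure = ⊤ →
      Orthonormal ℂ f → (Submodule.span ℂ (Set.range f)).topologicalClosure = ⊤ →
      ∫⁻ t, Phi φ (fun n => (inner ℂ (f n) (𝒜 t (e n)) : ℂ)) ∂μ < ⊤) :
    ∀ x y : ℕ → H,
      (∀ h : H, Summable fun n => ‖(inner ℂ (x n) h : ℂ)‖ ^ (2 : ℝ)) →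
      (∀ h : H, (∑' n, ‖(inner ℂ (x n) h : ℂ)‖ ^ (2 : ℝ)) ≤ ‖h‖ ^ (2 : ℝ)) →
      (∀ h : H, Summable fun n => ‖(inner ℂ (y n) h : ℂ)‖ ^ (2 : ℝ)) →
      (∀ h : H, (∑' n, ‖(inner ℂ (y n) h : ℂ)‖ ^ (2 : ℝ)) ≤ ‖h‖ ^ (2 : ℝ)) →
      ∫⁻ t, Phi φ (fun n => (inner ℂ (y n) (𝒜 t (x n)) : ℂ)) ∂μ < ⊤ := by
  intro x y hx _ hy _
  exact stmt13_general hinf (Seminorm.of φ hφ_add hφ_smul)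
    (B := fun t => (innerₛₗ ℂ).compl₂ (𝒜 t : H →ₗ[ℂ] H)) (fun x y => (hmeas x y).aemeasurable)
    (fun e f => hONB e f e.orthonormal e.dense_span f.orthonormal f.dense_span) hx hy
end

section
/- Let K be a compact Hausdorff space, (X, ν) a measure space, 1 ≤ p ≤ q < ∞ with 1 < q and q' the conjugate exponent of q, and (Ω, 𝔐, μ) a measure space. Let 𝒜 : Ω → B(C(K,ℝ), L^q(X,ν)) be such that for every f ∈ C(K,ℝ) and every g ∈ L^{q'}(X,ν) the function t ↦ ∫_X (𝒜_t f)·g dν is integrable on Ω, and suppose each 𝒜_t is a positive operator (f ≥ 0 implies 𝒜_t f ≥ 0 ν-a.e.). Then for every weakly p-summable sequence (f_n)_{n=1}^∞ in C(K,ℝ) and every sequence (g_n)_{n=1}^∞ in L^{q'}(X,ν) with ∑_n ‖g_n‖_{q'}^{q'} < ∞, one has ∫_Ω ∑_{n=1}^∞ |∫_X (𝒜_t f_n)·g_n dν| dμ(t) < +∞. -/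
open MeasureTheory ENNReal

/-!
By the closed graph theorem a weakly `q`-summable sequence in `C(K, ℝ)` satisfies
`(∑ |f n k| ^ q) ^ (1 / q) ≤ C` uniformly in `k`. By Hölder,
`∑ |c n • f n| ≤ C (∑ |c n| ^ q') ^ (1 / q') • 1` for all scalars `c`, and a positive operator `A`
transports this inequality between functions to
`∑ |c n * A (f n)| ≤ C (∑ |c n| ^ q') ^ (1 / q') * A 1` almost everywhere. The space of all `c` is
separable, so the exceptional null set can be chosen independently of `c`. Taking `c n = g n x` at
the point `x` gives `∑ |∫ A (f n) * g n| ≤ C ∫ A 1 * G` with `G = (∑ |g n| ^ q') ^ (1 / q')`, and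
`G` lies in `L^{q'}`. The right-hand side is integrable over `Ω` by the hypothesis at `f = 1`.
-/

section WeaklySummable

variable {ι 𝕜 E : Type*} [NontriviallyNormedField 𝕜] [NormedAddCommGroup E] [NormedSpace 𝕜 E]
  {p q : ℝ} {f : ι → E}

variable (𝕜) in
/-- Weak `r`-summability of a family in a normed space: `∑ ‖φ (f n)‖ ^ r < ∞` for every continuous
linear functional `φ`. -/
def WeaklySummable (r : ℝ) (f : ι → E) : Prop :=
  ∀ φ : StrongDual 𝕜 E, Summable fun n => ‖φ (f n)‖ ^ r

theorem WeaklySummable.memℓp (hf : WeaklySummable 𝕜 p f) (hp : 0 < p) (φ : StrongDual 𝕜 E) :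
    Memℓp (fun n => φ (f n)) (ENNReal.ofReal p) :=
  memℓp_gen (by simpa only [ENNReal.toReal_ofReal hp.le] using hf φ)

theorem WeaklySummable.mono (hf : WeaklySummable 𝕜 p f) (hp : 0 < p) (hpq : p ≤ q) :
    WeaklySummable 𝕜 q f := by
  have hq : 0 < (ENNReal.ofReal q).toReal := by
    rw [ENNReal.toReal_ofReal (hp.trans_le hpq).le]
    exact hp.trans_le hpq
  intro φ
  simpa only [ENNReal.toReal_ofReal (hp.trans_le hpq).le] using
    ((hf.memℓp hp φ).of_exponent_ge (ENNReal.ofReal_le_ofReal hpq)).summable hq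

/-- The linear map `φ ↦ (φ (f n))ₙ` from the dual of `E` to `ℓ^p` attached to a weakly `p`-summable
family; its operator norm is the weak `p`-norm of `f`. -/
def WeaklySummable.dualTolp (hf : WeaklySummable 𝕜 p f) (hp : 0 < p) :
    StrongDual 𝕜 E →ₗ[𝕜] lp (fun _ : ι => 𝕜) (ENNReal.ofReal p) where
  toFun φ := ⟨fun n => φ (f n), hf.memℓp hp φ⟩
  map_add' _ _ := rfl
  map_smul' _ _ := rfl

theorem WeaklySummable.continuous_dualTolp [CompleteSpace 𝕜] [Fact (1 ≤ ENNReal.ofReal p)]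
    (hf : WeaklySummable 𝕜 p f) (hp : 0 < p) : Continuous (hf.dualTolp hp) := by
  refine (hf.dualTolp hp).continuous_of_seq_closed_graph fun u φ y hu hy => ?_
  ext n
  exact tendsto_nhds_unique (((lp.evalCLM 𝕜 (fun _ => 𝕜) _ n).continuous.tendsto y).comp hy)
    (((NormedSpace.inclusionInDoubleDual 𝕜 E (f n)).continuous.tendsto φ).comp hu)

theorem WeaklySummable.exists_forall_sum_rpow_le [CompleteSpace 𝕜] (hf : WeaklySummable 𝕜 p f)
    (hp : 1 ≤ p) :
    ∃ C, 0 ≤ C ∧ ∀ (φ : StrongDual 𝕜 E) (s : Finset ι),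
      (∑ n ∈ s, ‖φ (f n)‖ ^ p) ^ (1 / p) ≤ C * ‖φ‖ := by
  have hp_pos : 0 < p := zero_lt_one.trans_le hp
  have : Fact (1 ≤ ENNReal.ofReal p) := ⟨ENNReal.one_le_ofReal.2 hp⟩
  let T : StrongDual 𝕜 E →L[𝕜] lp (fun _ : ι => 𝕜) (ENNReal.ofReal p) :=
    ⟨hf.dualTolp hp_pos, hf.continuous_dualTolp hp_pos⟩
  refine ⟨‖T‖, T.opNorm_nonneg, fun φ s => le_trans ?_ (T.le_opNorm φ)⟩
  rw [one_div, Real.rpow_inv_le_iff_of_pos (by positivity) (norm_nonneg _) hp_pos]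
  have h_sum := lp.sum_rpow_le_norm_rpow (by rwa [ENNReal.toReal_ofReal hp_pos.le]) (T φ) s
  rwa [ENNReal.toReal_ofReal hp_pos.le] at h_sum

theorem WeaklySummable.exists_forall_sum_apply_rpow_le [CompleteSpace 𝕜] {K : Type*}
    [TopologicalSpace K] [CompactSpace K] {f : ι → C(K, 𝕜)} (hf : WeaklySummable 𝕜 p f)
    (hp : 1 ≤ p) :
    ∃ C, 0 ≤ C ∧ ∀ (k : K) (s : Finset ι), (∑ n ∈ s, ‖f n k‖ ^ p) ^ (1 / p) ≤ C := by
  obtain ⟨C, hC_nonneg, hC⟩ := hf.exists_forall_sum_rpow_le hp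
  refine ⟨C, hC_nonneg, fun k s => (hC (ContinuousMap.evalCLM 𝕜 k) s).trans ?_⟩
  have h_eval : ‖(ContinuousMap.evalCLM 𝕜 k : StrongDual 𝕜 C(K, 𝕜))‖ ≤ 1 :=
    ContinuousLinearMap.opNorm_le_bound _ zero_le_one fun f => by
      simpa only [one_mul, ContinuousMap.evalCLM_apply] using f.norm_coe_le_norm k
  exact mul_le_of_le_one_right hC_nonneg h_eval

end WeaklySummable

section PositiveMap

variable {F α β : Type*} [AddCommGroup α] [Lattice α] [AddCommGroup β] [Lattice β]
  [FunLike F α β] [AddMonoidHomClass F α β] [OrderHomClass F α β]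

theorem abs_map_le_map_abs (A : F) (a : α) : |A a| ≤ A |a| :=
  abs_le'.2 ⟨OrderHomClass.mono A (le_abs_self a),
    (map_neg A a).symm.trans_le (OrderHomClass.mono A (neg_le_abs a))⟩

theorem sum_abs_map_le_map_sum_abs [IsOrderedAddMonoid β] {ι : Type*} (A : F) (s : Finset ι)
    (a : ι → α) : ∑ n ∈ s, |A (a n)| ≤ A (∑ n ∈ s, |a n|) :=
  (Finset.sum_le_sum fun n _ => abs_map_le_map_abs A (a n)).trans_eq (map_sum A _ s).symm

end PositiveMap

theorem sum_abs_smul_le_smul_one {ι K : Type*} [TopologicalSpace K] {q q' C : ℝ}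
    (hqq' : q.HolderConjugate q') {f : ι → C(K, ℝ)} {s : Finset ι}
    (hf : ∀ k, (∑ n ∈ s, ‖f n k‖ ^ q) ^ (1 / q) ≤ C) (c : ι → ℝ) :
    ∑ n ∈ s, |c n • f n| ≤ (C * (∑ n ∈ s, |c n| ^ q') ^ (1 / q')) • (1 : C(K, ℝ)) := by
  refine ContinuousMap.le_def.2 fun k => ?_
  simp only [ContinuousMap.sum_apply, ContinuousMap.abs_apply, ContinuousMap.smul_apply,
    ContinuousMap.one_apply, smul_eq_mul, mul_one, abs_mul]
  calc ∑ n ∈ s, |c n| * |f n k|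
      ≤ (∑ n ∈ s, ‖f n k‖ ^ q) ^ (1 / q) * (∑ n ∈ s, |c n| ^ q') ^ (1 / q') := by
        simpa only [abs_abs, mul_comm |c _|, Real.norm_eq_abs] using
          Real.inner_le_Lp_mul_Lq s (fun n => |f n k|) (fun n => |c n|) hqq'
    _ ≤ C * (∑ n ∈ s, |c n| ^ q') ^ (1 / q') := by gcongr; exact hf k

theorem ae_forall_of_forall_ae_of_isClosed {X Y : Type*} [MeasurableSpace X] {ν : Measure X}
    [TopologicalSpace Y] [TopologicalSpace.SeparableSpace Y] {P : X → Y → Prop}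
    (h_closed : ∀ x, IsClosed {y | P x y}) (h : ∀ y, ∀ᵐ x ∂ν, P x y) :
    ∀ᵐ x ∂ν, ∀ y, P x y := by
  obtain ⟨D, hD_countable, hD_dense⟩ := TopologicalSpace.exists_countable_dense Y
  filter_upwards [(ae_ball_iff hD_countable).2 fun y _ => h y] with x hx y
  exact (h_closed x).closure_subset_iff.2 hx (hD_dense y)

section Lp

variable {ι X : Type*} [Countable ι] [MeasurableSpace X] {ν : Measure X}

theorem lintegral_enorm_rpow_eq_ofReal_norm_rpow {E : Type*} [NormedAddCommGroup E] {r : ℝ}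
    (hr : 0 < r) (g : Lp E (ENNReal.ofReal r) ν) :
    ∫⁻ x, ‖g x‖ₑ ^ r ∂ν = ENNReal.ofReal (‖g‖ ^ r) := by
  have h := eLpNorm_nnreal_pow_eq_lintegral (μ := ν) (f := g) (Real.toNNReal_pos.2 hr).ne'
  rw [Real.coe_toNNReal r hr.le] at h
  rw [← h, Lp.norm_def, ← ENNReal.ofReal_rpow_of_nonneg ENNReal.toReal_nonneg hr.le,
    ENNReal.ofReal_toReal (Lp.eLpNorm_ne_top g)]
  rfl

theorem exists_Lp_forall_sum_norm_rpow_le {E : Type*} [NormedAddCommGroup E] {r : ℝ} (hr : 0 < r)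
    {g : ι → Lp E (ENNReal.ofReal r) ν} (hg : Summable fun n => ‖g n‖ ^ r) :
    ∃ G : Lp ℝ (ENNReal.ofReal r) ν, ∀ᵐ x ∂ν, ∀ s : Finset ι,
      (∑ n ∈ s, ‖g n x‖ ^ r) ^ (1 / r) ≤ G x := by
  let S : X → ℝ≥0∞ := fun x => ∑' n, ‖g n x‖ₑ ^ r
  have h_meas (n : ι) : AEMeasurable (fun x => ‖g n x‖ₑ ^ r) ν :=
    (Lp.aestronglyMeasurable (g n)).enorm.pow_const r
  have hS_meas : AEMeasurable S ν := AEMeasurable.tsum h_meas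
  have hS_lintegral : ∫⁻ x, S x ∂ν ≠ ∞ := by
    rw [lintegral_tsum h_meas]
    simpa only [lintegral_enorm_rpow_eq_ofReal_norm_rpow hr] using hg.tsum_ofReal_ne_top
  have hS_rpow (x : X) : ‖(S x).toReal ^ (1 / r)‖ ^ r = (S x).toReal := by
    rw [Real.norm_of_nonneg (by positivity), one_div,
      Real.rpow_inv_rpow ENNReal.toReal_nonneg hr.ne']
  have hG : MemLp (fun x => (S x).toReal ^ (1 / r)) (ENNReal.ofReal r) ν := by
    refine (integrable_norm_rpow_iff (hS_meas.ennreal_toReal.pow_const _).aestronglyMeasurable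
      (ENNReal.ofReal_pos.2 hr).ne' ENNReal.ofReal_ne_top).1 ?_
    simp only [ENNReal.toReal_ofReal hr.le, hS_rpow]
    exact integrable_toReal_of_lintegral_ne_top hS_meas hS_lintegral
  refine ⟨hG.toLp _, ?_⟩
  filter_upwards [ae_lt_top' hS_meas hS_lintegral, hG.coeFn_toLp] with x hx_fin hx_coe s
  have h_sum : ∑ n ∈ s, ‖g n x‖ ^ r = (∑ n ∈ s, ‖g n x‖ₑ ^ r).toReal := by
    rw [ENNReal.toReal_sum fun n _ => by finiteness]
    simp only [← ENNReal.toReal_rpow, toReal_enorm]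
  rw [hx_coe, h_sum]
  gcongr
  · exact hx_fin.ne
  · exact ENNReal.sum_le_tsum s

variable {K : Type*} [TopologicalSpace K] {r : ℝ≥0∞} {q q' C : ℝ}

theorem ae_forall_sum_abs_mul_map_le (hqq' : q.HolderConjugate q') (A : C(K, ℝ) →ₚ[ℝ] Lp ℝ r ν)
    {f : ι → C(K, ℝ)} {s : Finset ι} (hf : ∀ k, (∑ n ∈ s, ‖f n k‖ ^ q) ^ (1 / q) ≤ C) :
    ∀ᵐ x ∂ν, ∀ c : ι → ℝ,
      ∑ n ∈ s, |c n * A (f n) x| ≤ C * (∑ n ∈ s, |c n| ^ q') ^ (1 / q') * A 1 x := by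
  have hq' : 0 < q' := hqq'.symm.pos
  have h_rpow_cont : Continuous fun c : ι → ℝ => (∑ n ∈ s, |c n| ^ q') ^ (1 / q') :=
    (continuous_finsetSum s fun n _ => (continuous_apply n).abs.rpow_const fun _ =>
      .inr hq'.le).rpow_const fun _ => .inr (by positivity)
  refine ae_forall_of_forall_ae_of_isClosed
    (fun x => isClosed_le (by fun_prop) (by fun_prop)) fun c => ?_
  set B := C * (∑ n ∈ s, |c n| ^ q') ^ (1 / q')
  have h_Lp : ∑ n ∈ s, |c n • A (f n)| ≤ B • A 1 := by
    simpa only [map_smul] using (sum_abs_map_le_map_sum_abs A s fun n => c n • f n).trans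
      (OrderHomClass.mono A (sum_abs_smul_le_smul_one hqq' hf c))
  have h_abs : ∀ᵐ x ∂ν, ∀ n, |c n • A (f n)| x = |c n * A (f n) x| := by
    refine ae_all_iff.2 fun n => ?_
    filter_upwards [Lp.coeFn_abs (c n • A (f n)), Lp.coeFn_smul (c n) (A (f n))] with x h₁ h₂
    rw [h₁, h₂, Pi.smul_apply, smul_eq_mul]
  filter_upwards [(Lp.coeFn_le _ _).2 h_Lp, h_abs, Lp.coeFn_smul B (A 1),
    Lp.coeFn_fun_finsetSum s fun n => |c n • A (f n)|] with x h_le h_abs h_smul h_sum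
  simpa only [h_sum, h_abs, h_smul, Pi.smul_apply, smul_eq_mul] using h_le

theorem ae_tsum_enorm_map_mul_le (hqq' : q.HolderConjugate q') (hC : 0 ≤ C)
    (A : C(K, ℝ) →ₚ[ℝ] Lp ℝ r ν) {f : ι → C(K, ℝ)}
    (hf : ∀ (k : K) (s : Finset ι), (∑ n ∈ s, ‖f n k‖ ^ q) ^ (1 / q) ≤ C)
    {g : ι → X → ℝ} {G : X → ℝ}
    (hG : ∀ᵐ x ∂ν, ∀ s : Finset ι, (∑ n ∈ s, ‖g n x‖ ^ q') ^ (1 / q') ≤ G x) :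
    ∀ᵐ x ∂ν, ∑' n, ‖A (f n) x * g n x‖ₑ ≤ ENNReal.ofReal (C * (A 1 x * G x)) := by
  have hA_one : ∀ᵐ x ∂ν, 0 ≤ A 1 x := (Lp.coeFn_nonneg _).2 (A.map_nonneg zero_le_one)
  have hA : ∀ᵐ x ∂ν, ∀ (s : Finset ι) (c : ι → ℝ),
      ∑ n ∈ s, |c n * A (f n) x| ≤ C * (∑ n ∈ s, |c n| ^ q') ^ (1 / q') * A 1 x :=
    ae_all_iff.2 fun s => ae_forall_sum_abs_mul_map_le hqq' A fun k => hf k s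
  filter_upwards [hA, hG, hA_one] with x hAx hGx hA_one_x
  rw [ENNReal.tsum_eq_iSup_sum]
  refine iSup_le fun s => ?_
  simp only [Real.enorm_eq_ofReal_abs]
  rw [← ENNReal.ofReal_sum_of_nonneg fun _ _ => abs_nonneg _]
  refine ENNReal.ofReal_le_ofReal ?_
  calc ∑ n ∈ s, |A (f n) x * g n x|
      = ∑ n ∈ s, |g n x * A (f n) x| := by simp only [mul_comm]
    _ ≤ C * (∑ n ∈ s, ‖g n x‖ ^ q') ^ (1 / q') * A 1 x := hAx s fun n => g n x
    _ ≤ C * G x * A 1 x := by gcongr; exact hGx s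
    _ = C * (A 1 x * G x) := by ring

theorem tsum_enorm_integral_map_mul_le (hqq' : q.HolderConjugate q') (hC : 0 ≤ C)
    (A : C(K, ℝ) →ₚ[ℝ] Lp ℝ (ENNReal.ofReal q) ν) {f : ι → C(K, ℝ)}
    (hf : ∀ (k : K) (s : Finset ι), (∑ n ∈ s, ‖f n k‖ ^ q) ^ (1 / q) ≤ C)
    {g : ι → Lp ℝ (ENNReal.ofReal q') ν} {G : Lp ℝ (ENNReal.ofReal q') ν}
    (hG : ∀ᵐ x ∂ν, ∀ s : Finset ι, (∑ n ∈ s, ‖g n x‖ ^ q') ^ (1 / q') ≤ G x) :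
    ∑' n, ‖∫ x, A (f n) x * g n x ∂ν‖ₑ ≤ ENNReal.ofReal (C * ∫ x, A 1 x * G x ∂ν) := by
  have : (ENNReal.ofReal q).HolderConjugate (ENNReal.ofReal q') := hqq'.ennrealOfReal
  have h_int : Integrable (fun x => A 1 x * G x) ν := (Lp.memLp (A 1)).integrable_mul (Lp.memLp G)
  have hA_one : ∀ᵐ x ∂ν, 0 ≤ A 1 x := (Lp.coeFn_nonneg _).2 (A.map_nonneg zero_le_one)
  have h_nonneg : ∀ᵐ x ∂ν, 0 ≤ C * (A 1 x * G x) := by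
    filter_upwards [hA_one, hG] with x hA_one_x hGx
    have hG_nonneg : 0 ≤ G x := (Real.rpow_nonneg (by simp) _).trans (hGx ∅)
    positivity
  calc ∑' n, ‖∫ x, A (f n) x * g n x ∂ν‖ₑ
      ≤ ∑' n, ∫⁻ x, ‖A (f n) x * g n x‖ₑ ∂ν :=
        ENNReal.tsum_le_tsum fun n => enorm_integral_le_lintegral_enorm _
    _ = ∫⁻ x, ∑' n, ‖A (f n) x * g n x‖ₑ ∂ν :=
        (lintegral_tsum fun n =>
          ((Lp.aestronglyMeasurable (A (f n))).mul (Lp.aestronglyMeasurable (g n))).enorm).symm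
    _ ≤ ∫⁻ x, ENNReal.ofReal (C * (A 1 x * G x)) ∂ν :=
        lintegral_mono_ae (ae_tsum_enorm_map_mul_le hqq' hC A hf hG)
    _ = ENNReal.ofReal (C * ∫ x, A 1 x * G x ∂ν) := by
        rw [← ofReal_integral_eq_lintegral_ofReal (h_int.const_mul C) h_nonneg, integral_const_mul]

end Lp

theorem stmt16_general {ι K X Ω : Type*} [Countable ι] [TopologicalSpace K] [CompactSpace K]
    [MeasurableSpace X] {ν : Measure X} [MeasurableSpace Ω] {μ : Measure Ω} {p q q' : ℝ}
    (hp : 0 < p) (hpq : p ≤ q) (hqq' : q.HolderConjugate q')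
    (𝒜 : Ω → C(K, ℝ) →ₚ[ℝ] Lp ℝ (ENNReal.ofReal q) ν)
    (hint : ∀ g : Lp ℝ (ENNReal.ofReal q') ν, Integrable (fun t => ∫ x, 𝒜 t 1 x * g x ∂ν) μ)
    {f : ι → C(K, ℝ)} {g : ι → Lp ℝ (ENNReal.ofReal q') ν}
    (hf : WeaklySummable ℝ p f) (hg : Summable fun n => ‖g n‖ ^ q') :
    ∫⁻ t, ∑' n, ‖∫ x, 𝒜 t (f n) x * g n x ∂ν‖ₑ ∂μ < ∞ := by
  obtain ⟨C, hC, hfC⟩ := (hf.mono hp hpq).exists_forall_sum_apply_rpow_le hqq'.lt.le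
  obtain ⟨G, hG⟩ := exists_Lp_forall_sum_norm_rpow_le hqq'.symm.pos hg
  calc ∫⁻ t, ∑' n, ‖∫ x, 𝒜 t (f n) x * g n x ∂ν‖ₑ ∂μ
      ≤ ∫⁻ t, ENNReal.ofReal (C * ∫ x, 𝒜 t 1 x * G x ∂ν) ∂μ :=
        lintegral_mono fun t => tsum_enorm_integral_map_mul_le hqq' hC (𝒜 t) hfC hG
    _ < ∞ := ((hint G).const_mul C).lintegral_lt_top

/-- if `𝒜 : Ω → B(C(K,ℝ), L^q(X,ν))` is weakly* integrable (against all
`g ∈ L^{q'}`) and each `𝒜_t` is a positive operator, then for every weakly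
`p`-summable sequence `(f_n)` in `C(K,ℝ)` and every `(g_n)` in `L^{q'}` with
`∑_n ‖g_n‖_{q'}^{q'} < ∞`, one has
`∫_Ω ∑_n |∫_X (𝒜_t f_n)·g_n dν| dμ < ∞`. -/
theorem stmt16 (K : Type*) [TopologicalSpace K] [CompactSpace K] [T2Space K]
    (X : Type*) [MeasurableSpace X] (ν : Measure X)
    (p q q' : ℝ) (hp : 1 ≤ p) (hpq : p ≤ q) (hq : 1 < q) (hq' : 1 / q + 1 / q' = 1)
    [Fact (1 ≤ ENNReal.ofReal q)] [Fact (1 ≤ ENNReal.ofReal q')]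
    {Ω : Type*} [MeasurableSpace Ω] (μ : Measure Ω)
    (𝒜 : Ω → (C(K, ℝ) →L[ℝ] Lp ℝ (ENNReal.ofReal q) ν))
    (hint : ∀ (f : C(K, ℝ)) (g : Lp ℝ (ENNReal.ofReal q') ν),
      Integrable (fun t => ∫ x, (𝒜 t f : X → ℝ) x * (g : X → ℝ) x ∂ν) μ)
    (hpos : ∀ t : Ω, ∀ f : C(K, ℝ), 0 ≤ f → ∀ᵐ x ∂ν, 0 ≤ (𝒜 t f : X → ℝ) x) :
    ∀ (f : ℕ → C(K, ℝ)) (g : ℕ → Lp ℝ (ENNReal.ofReal q') ν),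
      (∀ φ : StrongDual ℝ C(K, ℝ), Summable fun n => ‖φ (f n)‖ ^ p) →
      (Summable fun n => ‖g n‖ ^ q') →
      ∫⁻ t, ∑' n,
        (‖∫ x, (𝒜 t (f n) : X → ℝ) x * (g n : X → ℝ) x ∂ν‖₊ : ℝ≥0∞) ∂μ < ⊤ := by
  intro f g hf hg
  have hqq' : q.HolderConjugate q' := Real.holderConjugate_iff.2 ⟨hq, by simpa using hq'⟩
  exact stmt16_general (zero_lt_one.trans_le hp) hpq hqq'
    (fun t => .mk₀ (𝒜 t).toLinearMap fun f hf => (Lp.coeFn_nonneg _).1 (hpos t f hf))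
    (hint 1) hf hg
end
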